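/- Let X and Y be metric spaces, F : X ⇉ Y a set-valued mapping, (x̄,ȳ) ∈ gph F, and φ : [0,∞) → [0,∞) continuously differentiable with φ(0)=0 and φ'(t)>0 for all t≥0. Then (i) sr_φ[F](x̄,ȳ) ≤ |∇F|_φ^◇(x̄,ȳ); and (ii) if X and Y are complete and gph F is locally closed near (x̄,ȳ), then sr_φ[F](x̄,ȳ) = |∇F|_φ^◇(x̄,ȳ). -/

import Mathlib

open Filter Metric Set Topology ENNReal

/-- The parametric metric `d_ρ((x,y),(u,v)) = max{d(x,u), ρ·d(y,v)}` on a product. -/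
noncomputable def dRho {X Y : Type*} [MetricSpace X] [MetricSpace Y]
    (ρ : ℝ) (p q : X × Y) : ℝ :=
  max (dist p.1 q.1) (ρ * dist p.2 q.2)

/-- The graph of a set-valued mapping `F : X ⇉ Y`. -/
def svGraph {X Y : Type*} (F : X → Set Y) : Set (X × Y) := {p : X × Y | p.2 ∈ F p.1}

/-- The modulus of metric φ-subregularity
`sr_φ[F](x̄,ȳ) = liminf_{x→x̄, x∉F⁻¹(ȳ)} φ(d(ȳ,F(x)))/d(x,F⁻¹(ȳ))`.
(The value `φ(d(ȳ,F(x)))` is encoded as `inf_{y ∈ F(x)} φ(d(ȳ,y))`, which equals `+∞`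
when `F(x) = ∅`.) -/
noncomputable def srPhi {X Y : Type*} [MetricSpace X] [MetricSpace Y]
    (F : X → Set Y) (φ : ℝ → ℝ) (xbar : X) (ybar : Y) : ℝ≥0∞ :=
  ⨆ (δ : ℝ) (_ : 0 < δ),
    ⨅ (x : X) (_ : dist x xbar < δ ∧ ybar ∉ F x),
      (⨅ (y : Y) (_ : y ∈ F x), ENNReal.ofReal (φ (dist ybar y))) /
        ENNReal.ofReal (Metric.infDist x {u : X | ybar ∈ F u})

/-- The nonlocal (φ,ρ)-slope `|∇F|_{φ,ρ}^◇(x,y)` of `F` at `p = (x,y) ∈ gph F`. -/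
noncomputable def nonlocalPhiSlopeRho {X Y : Type*} [MetricSpace X] [MetricSpace Y]
    (F : X → Set Y) (φ : ℝ → ℝ) (ybar : Y) (ρ : ℝ) (p : X × Y) : ℝ≥0∞ :=
  ⨆ (q : X × Y) (_ : q ∈ svGraph F ∧ q ≠ p),
    ENNReal.ofReal (φ (dist p.2 ybar) - φ (dist q.2 ybar)) / ENNReal.ofReal (dRho ρ q p)

/-- The uniform strict φ-slope `|∇F|_φ^◇(x̄,ȳ)` of `F` at `(x̄,ȳ)`. -/
noncomputable def uniformStrictPhiSlope {X Y : Type*} [MetricSpace X] [MetricSpace Y]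
    (F : X → Set Y) (φ : ℝ → ℝ) (xbar : X) (ybar : Y) : ℝ≥0∞ :=
  ⨆ (ρ : ℝ) (_ : 0 < ρ),
    ⨅ (p : X × Y) (_ : p ∈ svGraph F ∧ ybar ∉ F p.1 ∧
        dist p.1 xbar < ρ ∧ dist p.2 ybar < ρ),
      nonlocalPhiSlopeRho F φ ybar ρ p

/-- Ekeland's variational principle, for a perturbation function `e`. -/
theorem ekeland_aux {α : Type*} [MetricSpace α] [CompleteSpace α] (S : Set α) (hS : IsClosed S)
    (f : α → ℝ) (hf : Continuous f) (hf0 : ∀ p, 0 ≤ f p) (e : α → α → ℝ)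
    (he0 : ∀ p, e p p = 0) (het : ∀ p q r, e p r ≤ e p q + e q r) (c : ℝ) (hc : 0 < c)
    (hec : ∀ p q, c * dist p q ≤ e p q) (hecont : ∀ p, Continuous fun q => e q p)
    (p0 : α) (hp0 : p0 ∈ S) :
    ∃ p ∈ S, f p + e p p0 ≤ f p0 ∧ ∀ q ∈ S, f q + e q p ≤ f p → q = p := by
  have hepos : ∀ p q, 0 ≤ e p q := fun p q =>
    le_trans (mul_nonneg hc.le dist_nonneg) (hec p q)
  let T : α → Set α := fun p => {q | q ∈ S ∧ f q + e q p ≤ f p}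
  have hTtrans : ∀ p q r, q ∈ T p → r ∈ T q → r ∈ T p := by
    rintro p q r ⟨_, h1⟩ ⟨h2, h3⟩
    refine ⟨h2, ?_⟩
    have := het r q p
    linarith
  have hTclosed : ∀ p, IsClosed (T p) := fun p =>
    hS.inter (isClosed_le (hf.add (hecont p)) continuous_const)
  have hTself : ∀ p ∈ S, p ∈ T p := fun p hp => ⟨hp, by rw [he0]; simp⟩
  have step : ∀ (n : ℕ) (p : S), ∃ q : S, (q : α) ∈ T p ∧
      ∀ r ∈ T p, f q ≤ f r + (1 / 2 : ℝ) ^ n := by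
    intro n p
    have hne : (f '' T p).Nonempty := ⟨_, p, hTself p p.2, rfl⟩
    have hb : BddBelow (f '' T p) := ⟨0, by rintro _ ⟨q, _, rfl⟩; exact hf0 q⟩
    obtain ⟨_, ⟨q, hq, rfl⟩, hlt⟩ := Real.lt_sInf_add_pos hne
      (show (0 : ℝ) < (1 / 2 : ℝ) ^ n by positivity)
    refine ⟨⟨q, hq.1⟩, hq, fun r hr => ?_⟩
    have := csInf_le hb ⟨r, hr, rfl⟩
    simp only
    linarith
  choose g hg1 hg2 using step
  obtain ⟨s, hs0, hs⟩ : ∃ s : ℕ → S, (s 0).1 = p0 ∧ ∀ n, s (n + 1) = g n (s n) :=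
    ⟨fun n => Nat.rec ⟨p0, hp0⟩ (fun n p => g n p) n, rfl, fun n => rfl⟩
  have hmem : ∀ n k : ℕ, (s (n + k)).1 ∈ T (s n).1 := by
    intro n k
    induction k with
    | zero => exact hTself _ (s n).2
    | succ k ih =>
      refine hTtrans _ _ _ ih ?_
      have := hg1 (n + k) (s (n + k) : S)
      rw [← hs] at this
      exact this
  have hmem' : ∀ n m, n ≤ m → (s m : α) ∈ T (s n) := by
    intro n m h
    obtain ⟨k, rfl⟩ := Nat.exists_eq_add_of_le h
    exact hmem n k
  have hbound : ∀ n m, n + 1 ≤ m → c * dist (s m : α) (s (n + 1)) ≤ (1 / 2 : ℝ) ^ n := by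
    intro n m h
    have h1 := (hmem' _ _ h).2
    have h2 := hg2 n (s n) (s m) (hmem' n m (by omega))
    rw [← hs] at h2
    have := hec (s m) (s (n + 1))
    linarith
  have hpow : Tendsto (fun n : ℕ => (1 / 2 : ℝ) ^ n) atTop (𝓝 0) :=
    tendsto_pow_atTop_nhds_zero_of_lt_one (by norm_num) (by norm_num)
  have hcauchy : CauchySeq (fun n => (s n : α)) := by
    rw [Metric.cauchySeq_iff']
    intro ε hε
    obtain ⟨n, hn⟩ := (hpow.eventually (gt_mem_nhds (mul_pos hc hε))).exists
    refine ⟨n + 1, fun m hm => ?_⟩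
    have := hbound n m hm
    exact lt_of_mul_lt_mul_left (lt_of_le_of_lt this hn) hc.le
  obtain ⟨p, hp⟩ := cauchySeq_tendsto_of_complete hcauchy
  have hpT : ∀ n, p ∈ T (s n) := fun n =>
    (hTclosed _).mem_of_tendsto hp (eventually_atTop.2 ⟨n, fun m hm => hmem' n m hm⟩)
  have hpT0 := hpT 0
  rw [hs0] at hpT0
  refine ⟨p, hpT0.1, hpT0.2, fun q hq hqp => ?_⟩
  have hfq : f p ≤ f q := by
    refine le_of_forall_pos_le_add fun ε hε => ?_
    obtain ⟨n, hn⟩ := (hpow.eventually (gt_mem_nhds hε)).exists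
    have h1 := hg2 n (s n) q (hTtrans _ _ _ (hpT n) ⟨hq, hqp⟩)
    rw [← hs] at h1
    have h2 := (hpT (n + 1)).2
    have := hepos p (s (n + 1))
    linarith
  have h3 := hec q p
  have h4 : c * dist q p ≤ 0 := by linarith
  have h5 : dist q p ≤ 0 := by
    by_contra h
    push Not at h
    have := mul_pos hc h
    linarith
  exact dist_le_zero.1 h5

theorem phi_strictMono (φ φ' : ℝ → ℝ)
    (hφc0 : ContinuousWithinAt φ (Set.Ici 0) 0)
    (hderiv : ∀ t : ℝ, 0 < t → HasDerivAt φ (φ' t) t)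
    (hφ'pos : ∀ t : ℝ, 0 < t → 0 < φ' t) :
    ContinuousOn φ (Set.Ici 0) ∧ StrictMonoOn φ (Set.Ici 0) := by
  have hc : ContinuousOn φ (Set.Ici 0) := by
    intro t ht
    rcases eq_or_lt_of_le (show (0 : ℝ) ≤ t from ht) with h | h
    · subst h; exact hφc0
    · exact (hderiv t h).continuousAt.continuousWithinAt
  refine ⟨hc, strictMonoOn_of_deriv_pos (convex_Ici 0) hc fun t ht => ?_⟩
  rw [interior_Ici] at ht
  rw [(hderiv t ht).deriv]
  exact hφ'pos t ht

theorem phi_linear (φ φ' : ℝ → ℝ) (D : EReal) (hφ0 : φ 0 = 0)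
    (hc : ContinuousOn φ (Set.Ici 0))
    (hderiv : ∀ t : ℝ, 0 < t → HasDerivAt φ (φ' t) t)
    (hD : Filter.Tendsto (fun t : ℝ => ((φ' t : ℝ) : EReal)) (𝓝[>] (0:ℝ)) (𝓝 D))
    (hDpos : 0 < D) :
    ∃ c > 0, ∃ r > 0, ∀ t, 0 ≤ t → t < r → c * t ≤ φ t := by
  obtain ⟨c, hc0, hcD⟩ := EReal.lt_iff_exists_real_btwn.1 hDpos
  have hc0' : 0 < c := by exact_mod_cast hc0
  have hev := hD.eventually (lt_mem_nhds hcD)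
  rw [eventually_nhdsWithin_iff, Metric.eventually_nhds_iff] at hev
  obtain ⟨r, hr, hev⟩ := hev
  refine ⟨c, hc0', r, hr, fun t ht htr => ?_⟩
  have key := (convex_Icc (0 : ℝ) t).mul_sub_le_image_sub_of_le_deriv (f := φ) (C := c)
    (hc.mono Set.Icc_subset_Ici_self)
    (fun s hs => by
      rw [interior_Icc] at hs
      exact (hderiv s hs.1).differentiableAt.differentiableWithinAt)
    (fun s hs => by
      rw [interior_Icc] at hs
      rw [(hderiv s hs.1).deriv]
      have h1 : dist s 0 < r := by
        rw [Real.dist_eq, sub_zero, abs_of_pos hs.1]; linarith [hs.2]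
      have := hev h1 hs.1
      exact (EReal.coe_lt_coe_iff.1 this).le)
    0 ⟨le_rfl, ht⟩ t ⟨ht, le_rfl⟩ ht
  rw [hφ0] at key
  simpa using key

theorem ofReal_lt_div_aux {γ a b : ℝ} (hγ : 0 < γ) (hb : 0 ≤ b)
    (h : ENNReal.ofReal γ < ENNReal.ofReal a / ENNReal.ofReal b) : γ * b < a := by
  have h1 := ENNReal.mul_lt_of_lt_div h
  rw [← ENNReal.ofReal_mul hγ.le] at h1
  exact (ENNReal.ofReal_lt_ofReal_iff_of_nonneg (mul_nonneg hγ.le hb)).1 h1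

theorem partOne {X Y : Type*} [MetricSpace X] [MetricSpace Y]
    (F : X → Set Y) (xbar : X) (ybar : Y)
    (hgraph : ybar ∈ F xbar)
    (φ : ℝ → ℝ) (hφ0 : φ 0 = 0)
    (hlin : ∃ c > 0, ∃ r > 0, ∀ t, 0 ≤ t → t < r → c * t ≤ φ t) :
    srPhi F φ xbar ybar ≤ uniformStrictPhiSlope F φ xbar ybar := by
  refine le_of_forall_lt_imp_le_of_dense fun g hg => ?_
  rcases eq_or_ne g 0 with rfl | hg0
  · exact zero_le
  have hgtop : g ≠ ⊤ := ne_top_of_lt hg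
  obtain ⟨γ, hγ, rfl⟩ : ∃ γ : ℝ, 0 < γ ∧ g = ENNReal.ofReal γ :=
    ⟨g.toReal, ENNReal.toReal_pos hg0 hgtop, (ENNReal.ofReal_toReal hgtop).symm⟩
  unfold srPhi at hg
  simp only [lt_iSup_iff] at hg
  obtain ⟨δ, hδ, hg⟩ := hg
  obtain ⟨c, hc, r, hr, hlin⟩ := hlin
  unfold uniformStrictPhiSlope
  have hρ : 0 < min δ (min r (c / γ)) := by positivity
  refine le_iSup₂_of_le (min δ (min r (c / γ))) hρ ?_
  set ρ := min δ (min r (c / γ)) with hρdef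
  have hρ1 : ρ ≤ δ := min_le_left _ _
  have hρ2 : ρ ≤ r := (min_le_right _ _).trans (min_le_left _ _)
  have hρ3 : ρ ≤ c / γ := (min_le_right _ _).trans (min_le_right _ _)
  refine le_iInf₂ fun p hp => ?_
  obtain ⟨x, y⟩ := p
  obtain ⟨hpF, hpn, hpx, hpy⟩ := hp
  simp only at hpn hpx hpy
  have hpF' : y ∈ F x := hpF
  have h1 : ENNReal.ofReal γ < ENNReal.ofReal (φ (dist ybar y)) /
      ENNReal.ofReal (Metric.infDist x {u : X | ybar ∈ F u}) := by
    refine hg.trans_le ((iInf₂_le x ⟨hpx.trans_le hρ1, hpn⟩).trans ?_)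
    exact ENNReal.div_le_div_right (iInf₂_le y hpF') _
  have h2 := ofReal_lt_div_aux hγ Metric.infDist_nonneg h1
  have h3 : Metric.infDist x {u : X | ybar ∈ F u} < φ (dist ybar y) / γ := by
    rw [lt_div_iff₀ hγ]; linarith
  obtain ⟨u, hu, hxu⟩ := (Metric.infDist_lt_iff ⟨xbar, hgraph⟩).1 h3
  have hune : u ≠ x := by rintro rfl; exact hpn hu
  unfold nonlocalPhiSlopeRho
  refine le_iSup₂_of_le (u, ybar) ⟨hu, fun h => hune (congrArg Prod.fst h)⟩ ?_
  simp only [dist_self, hφ0, sub_zero]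
  have hpos : 0 < dRho ρ (u, ybar) (x, y) :=
    lt_of_lt_of_le (dist_pos.2 hune) (le_max_left _ _)
  rw [← ENNReal.ofReal_div_of_pos hpos]
  refine ENNReal.ofReal_le_ofReal ?_
  rw [le_div_iff₀ hpos]
  unfold dRho
  simp only
  rw [mul_max_of_nonneg _ _ hγ.le, dist_comm y ybar]
  refine max_le ?_ ?_
  · rw [lt_div_iff₀ hγ] at hxu
    rw [dist_comm u x]; linarith
  · rw [dist_comm y ybar] at hpy
    have h4 := hlin (dist ybar y) dist_nonneg (hpy.trans_le hρ2)
    rw [le_div_iff₀ hγ] at hρ3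
    have h5 := mul_le_mul_of_nonneg_right hρ3 (dist_nonneg (x := ybar) (y := y))
    linarith

theorem partTwo {X Y : Type*} [MetricSpace X] [MetricSpace Y] [CompleteSpace X] [CompleteSpace Y]
    (F : X → Set Y) (xbar : X) (ybar : Y)
    (hgraph : ybar ∈ F xbar)
    (φ : ℝ → ℝ) (hφ0 : φ 0 = 0)
    (hφnonneg : ∀ t : ℝ, 0 ≤ t → 0 ≤ φ t)
    (hcont : ContinuousOn φ (Set.Ici 0)) (hmono : StrictMonoOn φ (Set.Ici 0))
    (hU : ∃ U ∈ 𝓝 ((xbar, ybar) : X × Y), IsClosed U ∧ IsClosed (svGraph F ∩ U)) :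
    uniformStrictPhiSlope F φ xbar ybar ≤ srPhi F φ xbar ybar := by
  refine le_of_forall_lt_imp_le_of_dense fun g hg => ?_
  rcases eq_or_ne g 0 with rfl | hg0
  · exact zero_le
  have hgtop : g ≠ ⊤ := ne_top_of_lt hg
  obtain ⟨γ, hγ, rfl⟩ : ∃ γ : ℝ, 0 < γ ∧ g = ENNReal.ofReal γ :=
    ⟨g.toReal, ENNReal.toReal_pos hg0 hgtop, (ENNReal.ofReal_toReal hgtop).symm⟩
  unfold uniformStrictPhiSlope at hg
  simp only [lt_iSup_iff] at hg
  obtain ⟨ρ, hρ, hg⟩ := hg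
  obtain ⟨U, hUn, -, hUc⟩ := hU
  obtain ⟨r, hr, hrU⟩ := Metric.mem_nhds_iff.1 hUn
  have hUmem : ∀ (x : X) (y : Y), dist x xbar < r → dist y ybar < r → (x, y) ∈ U := by
    intro x y hx hy
    apply hrU
    rw [Metric.mem_ball, Prod.dist_eq]
    exact max_lt hx hy
  set η := min ρ r with hη
  have hηpos : 0 < η := lt_min hρ hr
  have hηρ : η ≤ ρ := min_le_left _ _
  have hηr : η ≤ r := min_le_right _ _
  have hφη : 0 < φ η := by
    have := hmono (Set.mem_Ici.2 (le_refl (0:ℝ))) (Set.mem_Ici.2 hηpos.le) hηpos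
    rwa [hφ0] at this
  have hδ : 0 < min (φ η / γ) (η / 3) := by positivity
  set δ := min (φ η / γ) (η / 3) with hδdef
  have hδ1 : γ * δ ≤ φ η := by
    have : δ ≤ φ η / γ := min_le_left _ _
    rw [le_div_iff₀ hγ] at this; linarith
  have hδ2 : 3 * δ ≤ η := by
    have : δ ≤ η / 3 := min_le_right _ _
    linarith
  have hsmall : ∀ t, 0 ≤ t → φ t < φ η → t < η := fun t ht h =>
    (hmono.lt_iff_lt ht hηpos.le).1 h
  unfold srPhi
  refine le_iSup₂_of_le δ hδ (le_iInf₂ fun x hx => ?_)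
  obtain ⟨hxδ, hxn⟩ := hx
  have hne : ({u : X | ybar ∈ F u}).Nonempty := ⟨xbar, hgraph⟩
  have hpos : 0 < Metric.infDist x {u : X | ybar ∈ F u} := by
    by_contra hcon
    have h0 : Metric.infDist x {u : X | ybar ∈ F u} < δ ∧
        Metric.infDist x {u : X | ybar ∈ F u} ≤ 0 := ⟨by linarith, by linarith⟩
    have : (x, ybar) ∈ svGraph F ∩ U := by
      rw [← hUc.closure_eq, Metric.mem_closure_iff]
      intro ε hε
      obtain ⟨u, hu, hxu⟩ := (Metric.infDist_lt_iff hne).1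
        (lt_of_le_of_lt h0.2 (lt_min hε hδ))
      refine ⟨(u, ybar), ⟨hu, hUmem _ _ ?_ (by simpa using hr)⟩, ?_⟩
      · have := dist_triangle u x xbar
        rw [dist_comm u x] at this
        have := hxu.trans_le (min_le_right _ _)
        linarith
      · rw [Prod.dist_eq]
        exact max_lt (hxu.trans_le (min_le_left _ _)) (by simpa using hε)
    exact hxn this.1
  rw [ENNReal.le_div_iff_mul_le (Or.inl (by simpa using hpos)) (Or.inl ENNReal.ofReal_ne_top),
    ← ENNReal.ofReal_mul hγ.le]
  refine le_iInf₂ fun y hy => ENNReal.ofReal_le_ofReal ?_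
  by_contra hcon
  push Not at hcon
  rw [dist_comm ybar y] at hcon
  have hid : Metric.infDist x {u : X | ybar ∈ F u} < δ :=
    (Metric.infDist_le_dist_of_mem (s := {u : X | ybar ∈ F u}) hgraph).trans_lt hxδ
  have hlt : φ (dist y ybar) < γ * δ := hcon.trans (mul_lt_mul_of_pos_left hid hγ)
  have hyη := hsmall _ dist_nonneg (hlt.trans_le hδ1)
  have hf : Continuous fun q : X × Y => φ (dist q.2 ybar) :=
    hcont.comp_continuous (by fun_prop) (fun q => dist_nonneg)
  obtain ⟨p, hpS, hp1, hp2⟩ := ekeland_aux (svGraph F ∩ U) hUc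
    (fun q : X × Y => φ (dist q.2 ybar)) hf (fun q => hφnonneg _ dist_nonneg)
    (fun q p => γ * dRho ρ q p) (by intro p; simp [dRho])
    (by
      intro a b d
      rw [← mul_add]
      refine mul_le_mul_of_nonneg_left ?_ hγ.le
      unfold dRho
      refine max_le ?_ ?_
      · exact (dist_triangle _ b.1 _).trans (add_le_add (le_max_left _ _) (le_max_left _ _))
      · refine (mul_le_mul_of_nonneg_left (dist_triangle _ b.2 _) hρ.le).trans ?_
        rw [mul_add]
        exact add_le_add (le_max_right _ _) (le_max_right _ _))
    (γ * min 1 ρ) (by positivity)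
    (by
      intro a b
      rw [mul_assoc]
      refine mul_le_mul_of_nonneg_left ?_ hγ.le
      unfold dRho
      rw [Prod.dist_eq, mul_max_of_nonneg _ _ (by positivity)]
      refine max_le_max ?_ ?_
      · exact (mul_le_mul_of_nonneg_right (min_le_left _ _) dist_nonneg).trans (one_mul _).le
      · exact mul_le_mul_of_nonneg_right (min_le_right _ _) dist_nonneg)
    (by intro p; unfold dRho; fun_prop)
    (x, y) ⟨hy, hUmem _ _ (by linarith) (by linarith)⟩
  obtain ⟨u, v⟩ := p
  simp only at hp1
  have hd0 : dist u x ≤ dRho ρ (u, v) (x, y) := le_max_left _ _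
  have hd1 : γ * dist u x ≤ γ * dRho ρ (u, v) (x, y) := mul_le_mul_of_nonneg_left hd0 hγ.le
  have hd1' : 0 ≤ γ * dist u x := by positivity
  have hfv := hφnonneg (dist v ybar) dist_nonneg
  have hd2 : dist u x < Metric.infDist x {u : X | ybar ∈ F u} :=
    lt_of_mul_lt_mul_left (by linarith) hγ.le
  have hun : ybar ∉ F u := by
    intro h
    have := Metric.infDist_le_dist_of_mem (x := x) (s := {u : X | ybar ∈ F u}) h
    rw [dist_comm] at this
    linarith
  have hux : dist u xbar < 2 * δ := by
    have := dist_triangle u x xbar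
    linarith
  have hvη : dist v ybar < η := hsmall _ dist_nonneg (by linarith)
  have hsl := hg.trans_le (iInf₂_le (u, v) ⟨hpS.1, hun, by simp only; linarith, by simp only; linarith⟩)
  unfold nonlocalPhiSlopeRho at hsl
  simp only [lt_iSup_iff] at hsl
  obtain ⟨q, ⟨hqF, hqne⟩, hq⟩ := hsl
  obtain ⟨a, b⟩ := q
  have he0 : dist a u ≤ dRho ρ (a, b) (u, v) := le_max_left _ _
  have hq' := ofReal_lt_div_aux hγ (dist_nonneg.trans he0) hq
  simp only at hq'
  have he1 : γ * dist a u ≤ γ * dRho ρ (a, b) (u, v) := mul_le_mul_of_nonneg_left he0 hγ.le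
  have he1' : 0 ≤ γ * dist a u := by positivity
  have hfb := hφnonneg (dist b ybar) dist_nonneg
  have hau : dist a u < δ := lt_of_mul_lt_mul_left (by linarith) hγ.le
  have hbη : dist b ybar < η := hsmall _ dist_nonneg (by linarith)
  refine hqne (hp2 (a, b) ⟨hqF, hUmem _ _ ?_ (by linarith)⟩ ?_)
  · have := dist_triangle a u xbar
    linarith
  · simp only
    linarith

/-- Theorem 6T1: (i) `sr_φ[F](x̄,ȳ) ≤ |∇F|_φ^◇(x̄,ȳ)`; (ii) if `X` and `Y` are complete
and `gph F` is locally closed near `(x̄,ȳ)`, then equality holds. -/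
theorem srPhi_le_uniformStrictPhiSlope {X Y : Type*} [MetricSpace X] [MetricSpace Y]
    (F : X → Set Y) (xbar : X) (ybar : Y)
    (hgraph : ybar ∈ F xbar)
    (φ φ' : ℝ → ℝ) (D : EReal)
    (hφ0 : φ 0 = 0)
    (hφnonneg : ∀ t : ℝ, 0 ≤ t → 0 ≤ φ t)
    (hφc0 : ContinuousWithinAt φ (Set.Ici 0) 0)
    (hderiv : ∀ t : ℝ, 0 < t → HasDerivAt φ (φ' t) t)
    (hφ'pos : ∀ t : ℝ, 0 < t → 0 < φ' t)
    (hφ'cont : ContinuousOn φ' (Set.Ioi 0))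
    (hD : Filter.Tendsto (fun t : ℝ => ((φ' t : ℝ) : EReal)) (𝓝[>] (0:ℝ)) (𝓝 D))
    (hDpos : 0 < D) :
    srPhi F φ xbar ybar ≤ uniformStrictPhiSlope F φ xbar ybar ∧
    (CompleteSpace X → CompleteSpace Y →
      (∃ U ∈ 𝓝 ((xbar, ybar) : X × Y), IsClosed U ∧ IsClosed (svGraph F ∩ U)) →
      srPhi F φ xbar ybar = uniformStrictPhiSlope F φ xbar ybar) := by
  obtain ⟨hcont, hmono⟩ := phi_strictMono φ φ' hφc0 hderiv hφ'pos
  have h1 := partOne F xbar ybar hgraph φ hφ0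
    (phi_linear φ φ' D hφ0 hcont hderiv hD hDpos)
  refine ⟨h1, fun _ _ hU => le_antisymm h1 ?_⟩
  exact partTwo F xbar ybar hgraph φ hφ0 hφnonneg hcont hmono hU
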